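/- Let p be a real number with 0 < p ≤ 1, let a = 2/(2−p), let i be a natural number, and let d be a real number with d ≥ a^i. Then ∑_{k=0}^∞ p(1−p)^k · ( (∑_{j=0}^{i+k+1} 2a^j) + (−1)^k d ) / d < 8/p + p/(2−p). -/

import Mathlib

/-!
The `k`-th pass over the target happens after `i + k + 2` complete rounds, up to `± d`, so its time
is a geometric sum in `a` and averaging over the geometric number of failed detections gives a
closed form. With `d ≥ a ^ i` the leading term is at most `2 p a² / ((a - 1) (1 - (1 - p) a))`.
In terms of `s = 1 / a` this is `2 p / ((1 - s) (s - (1 - p)))`, which by AM-GM is smallest when the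
two factors agree, that is for `a = 2 / (2 - p)`, where both factors are `p / 2`.
-/

theorem hasSum_pow_mul_geom_sum {K : Type*} [NormedField K] {q a : K} (hq : ‖q‖ < 1)
    (hqa : ‖q * a‖ < 1) (ha : a ≠ 1) (n : ℕ) :
    HasSum (fun k ↦ q ^ k * ∑ j ∈ Finset.range (n + k), a ^ j)
      ((a ^ n * (1 - q * a)⁻¹ - (1 - q)⁻¹) / (a - 1)) := by
  have h_diff := ((hasSum_geometric_of_norm_lt_one hqa).mul_left (a ^ n)).sub
    (hasSum_geometric_of_norm_lt_one hq)
  refine (h_diff.div_const (a - 1)).congr_fun fun k ↦ ?_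
  rw [geom_sum_eq ha]
  ring

/-- The time at which the Fast Approach with expansion ratio `a` makes its `k`-th pass, counted from
`k = 0`, over a target at distance `d` that it first reaches in round `i + 2`. Rounds alternate
between the two sides of the origin, so the target is passed outbound in round `i + k + 2` for even
`k` and on the way back in round `i + k + 1` for odd `k`. -/
def passTime (a d : ℝ) (i k : ℕ) : ℝ :=
  (∑ j ∈ Finset.range (i + k + 2), 2 * a ^ j) + (-1) ^ k * d

theorem hasSum_passTime {p a : ℝ} (hp : |1 - p| < 1) (hpa : |(1 - p) * a| < 1) (ha : a ≠ 1)
    (d : ℝ) (i : ℕ) :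
    HasSum (fun k ↦ p * (1 - p) ^ k * passTime a d i k)
      (2 / (a - 1) * (p * a ^ (i + 2) / (1 - (1 - p) * a) - 1) + p / (2 - p) * d) := by
  have hp0 : p ≠ 0 := by rintro rfl; simp at hp
  have h_rounds := (hasSum_pow_mul_geom_sum hp hpa ha (i + 2)).mul_left (2 * p)
  have h_last : HasSum (fun k ↦ p * d * (-(1 - p)) ^ k) (p * d * (1 - -(1 - p))⁻¹) :=
    (hasSum_geometric_of_abs_lt_one (by rwa [abs_neg])).mul_left (p * d)
  have h_value : 2 * p * ((a ^ (i + 2) * (1 - (1 - p) * a)⁻¹ - (1 - (1 - p))⁻¹) / (a - 1))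
      + p * d * (1 - -(1 - p))⁻¹
      = 2 / (a - 1) * (p * a ^ (i + 2) / (1 - (1 - p) * a) - 1) + p / (2 - p) * d := by
    rw [sub_sub_cancel, show 1 - -(1 - p) = 2 - p by ring]
    field_simp
  rw [← h_value]
  refine (h_rounds.add h_last).congr_fun fun k ↦ ?_
  rw [passTime, ← Finset.mul_sum, neg_pow (1 - p), add_right_comm i k 2]
  ring

theorem fast_approach_cr_bound_general {p a d : ℝ} {i : ℕ} (ha : 1 < a)
    (hpa : |(1 - p) * a| < 1) (hd : a ^ i ≤ d) :
    ∑' k, p * (1 - p) ^ k * passTime a d i k / d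
      < 2 * p * a ^ 2 / ((a - 1) * (1 - (1 - p) * a)) + p / (2 - p) := by
  have hp : |1 - p| < 1 := by
    rw [abs_mul, abs_of_pos (zero_lt_one.trans ha)] at hpa
    exact (le_mul_of_one_le_right (abs_nonneg _) ha.le).trans_lt hpa
  have hp0 : 0 < p := by linarith [(abs_lt.1 hp).2]
  have ha_sub : 0 < a - 1 := sub_pos.2 ha
  have hpa_sub : 0 < 1 - (1 - p) * a := sub_pos.2 (abs_lt.1 hpa).2
  have hd0 : 0 < d := (pow_pos (zero_lt_one.trans ha) i).trans_le hd
  set C := 2 * p * a ^ 2 / ((a - 1) * (1 - (1 - p) * a)) with hC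
  calc ∑' k, p * (1 - p) ^ k * passTime a d i k / d
      = (2 / (a - 1) * (p * a ^ (i + 2) / (1 - (1 - p) * a) - 1) + p / (2 - p) * d) / d :=
        ((hasSum_passTime hp hpa ha.ne' d i).div_const d).tsum_eq
    _ = C * (a ^ i / d) - 2 / (a - 1) / d + p / (2 - p) := by
        rw [add_div, mul_div_cancel_right₀ _ hd0.ne', hC, pow_add]
        field_simp
    _ < C * (a ^ i / d) + p / (2 - p) := by
        gcongr
        exact sub_lt_self _ (by positivity)
    _ ≤ C + p / (2 - p) := by
        gcongr
        exact mul_le_of_le_one_right (by positivity) ((div_le_one hd0).2 hd)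

theorem one_lt_two_div_two_sub {p : ℝ} (hp : 0 < p) (hp2 : p < 2) : 1 < 2 / (2 - p) := by
  rw [one_lt_div (by linarith)]
  linarith

theorem abs_one_sub_mul_two_div_two_sub_lt_one {p : ℝ} (hp : 0 < p) (hp43 : p < 4 / 3) :
    |(1 - p) * (2 / (2 - p))| < 1 := by
  have h2p : 0 < 2 - p := by linarith
  rw [← mul_div_assoc, abs_lt, lt_div_iff₀ h2p, div_lt_one h2p]
  constructor <;> linarith

theorem leading_term_two_div_two_sub {p : ℝ} (hp2 : p ≠ 2) :
    2 * p * (2 / (2 - p)) ^ 2 / ((2 / (2 - p) - 1) * (1 - (1 - p) * (2 / (2 - p)))) = 8 / p := by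
  have h2p : 2 - p ≠ 0 := sub_ne_zero.2 hp2.symm
  have h_left : 2 / (2 - p) - 1 = p / (2 - p) := by field_simp; ring
  have h_right : 1 - (1 - p) * (2 / (2 - p)) = p / (2 - p) := by field_simp; ring
  rw [h_left, h_right]
  field_simp
  norm_num

/-- Theorem 1 (analytic content): with a = 2/(2−p), for a target at distance d ≥ aⁱ,
the expected competitive ratio series of the Fast Approach is below 8/p + p/(2−p). -/
theorem fast_approach_cr_bound (p : ℝ) (hp : 0 < p) (hp1 : p ≤ 1) (i : ℕ)
    (d : ℝ) (hd : (2 / (2 - p)) ^ i ≤ d) :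
    (∑' k : ℕ,
      p * (1 - p) ^ k *
        ((∑ j ∈ Finset.range (i + k + 2), 2 * (2 / (2 - p)) ^ j) + (-1 : ℝ) ^ k * d) / d)
      < 8 / p + p / (2 - p) := by
  rw [← leading_term_two_div_two_sub (by linarith : p ≠ 2)]
  exact fast_approach_cr_bound_general (one_lt_two_div_two_sub hp (by linarith))
    (abs_one_sub_mul_two_div_two_sub_lt_one hp (by linarith)) hd
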